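/- arXiv:1803.10955 — 6 statements merged into one kernel-verified Lean document; each statement's English description precedes it below -/
import Mathlib

section
/- Let G be a finite group acting faithfully and transitively on a finite set Ω, let c ≥ 1 be an integer, and let x_1, …, x_k be representatives of the distinct conjugacy classes of elements of prime order in G. Let Q(G,c) be the proportion of c-tuples (ω_1, …, ω_c) ∈ Ω^c whose pointwise stabilizer in G is nontrivial (i.e. the probability that a randomly chosen c-tuple of points of Ω is not a base for G). Then Q(G,c) ≤ Σ_{i=1}^k |x_i^G| · fpr(x_i)^c, where fpr(x) = |Fix_Ω(x)|/|Ω| and Fix_Ω(x) = {ω ∈ Ω : x·ω = ω}. -/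
/-!
A tuple in `Ω ^ c` is a point of the diagonal action of `G`, and it is a base exactly when its
stabilizer is trivial; moreover the fixed point ratio of `g` on `Ω ^ c` is the `c`-th power of its
fixed point ratio on `Ω`. So the bound is the union bound, for one arbitrary action, on the set of
points with nontrivial stabilizer: by Cauchy's theorem each such point is fixed by an element of
prime order, and conjugate elements fix equally many points.
-/

open MulAction
open scoped Pointwise

section

variable {G X : Type*} [Group G]

theorem exists_prime_orderOf_mem_of_ne_bot {H : Subgroup G} [Finite H] (hH : H ≠ ⊥) :
    ∃ g ∈ H, (orderOf g).Prime := by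
  obtain ⟨p, hp, hpH⟩ := Nat.exists_prime_and_dvd (H.card_eq_one.not.mpr hH)
  have : Fact p.Prime := ⟨hp⟩
  obtain ⟨g, hg⟩ := exists_prime_orderOf_dvd_card' p hpH
  exact ⟨g, g.2, by rwa [Subgroup.orderOf_coe, hg]⟩

variable [MulAction G X]

theorem ncard_fixedBy_eq_of_isConj {g h : G} (hgh : IsConj g h) :
    (fixedBy X h).ncard = (fixedBy X g).ncard := by
  obtain ⟨k, rfl⟩ := isConj_iff.mp hgh
  rw [← smul_fixedBy, Set.ncard_smul_set]

theorem setOf_stabilizer_ne_bot_subset_iUnion_fixedBy [Finite G] {κ : Type*} {x : κ → G}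
    (hrep : ∀ g : G, (orderOf g).Prime → ∃ i, IsConj (x i) g) :
    {a : X | stabilizer G a ≠ ⊥} ⊆ ⋃ p : Σ i, conjugatesOf (x i), fixedBy X (p.2 : G) := by
  intro a ha
  obtain ⟨g, hga, hg⟩ := exists_prime_orderOf_mem_of_ne_bot ha
  obtain ⟨i, hi⟩ := hrep g hg
  exact Set.mem_iUnion.mpr ⟨⟨i, g, hi⟩, hga⟩

theorem ncard_stabilizer_ne_bot_le [Finite G] [Finite X] {κ : Type*} [Fintype κ] {x : κ → G}
    (hrep : ∀ g : G, (orderOf g).Prime → ∃ i, IsConj (x i) g) :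
    {a : X | stabilizer G a ≠ ⊥}.ncard ≤
      ∑ i, (conjugatesOf (x i)).ncard * (fixedBy X (x i)).ncard := by
  have := fun i => Fintype.ofFinite (conjugatesOf (x i))
  calc {a : X | stabilizer G a ≠ ⊥}.ncard
      ≤ (⋃ p : Σ i, conjugatesOf (x i), fixedBy X (p.2 : G)).ncard :=
        Set.ncard_le_ncard (setOf_stabilizer_ne_bot_subset_iUnion_fixedBy hrep)
    _ ≤ ∑ p : Σ i, conjugatesOf (x i), (fixedBy X (p.2 : G)).ncard :=
        Set.ncard_iUnion_le_of_fintype _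
    _ = ∑ i, ∑ g : conjugatesOf (x i), (fixedBy X (g : G)).ncard := Fintype.sum_sigma _
    _ = ∑ i, ∑ _g : conjugatesOf (x i), (fixedBy X (x i)).ncard :=
        Fintype.sum_congr _ _ fun i => Fintype.sum_congr _ _ fun g =>
          ncard_fixedBy_eq_of_isConj g.2
    _ = ∑ i, (conjugatesOf (x i)).ncard * (fixedBy X (x i)).ncard := by
        simp only [Finset.sum_const, Finset.card_univ, smul_eq_mul, ← Nat.card_eq_fintype_card,
          Nat.card_coe_set_eq]

variable (X) in
/-- The fixed point ratio `|Fix_X(g)| / |X|`, the proportion of points of `X` fixed by `g`. -/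
noncomputable def fixedPointRatio (g : G) : ℝ :=
  Nat.card (fixedBy X g) / Nat.card X

theorem card_stabilizer_ne_bot_div_card_le [Finite G] [Finite X] {κ : Type*} [Fintype κ]
    {x : κ → G} (hrep : ∀ g : G, (orderOf g).Prime → ∃ i, IsConj (x i) g) :
    (Nat.card {a : X // stabilizer G a ≠ ⊥} : ℝ) / Nat.card X ≤
      ∑ i, (Nat.card (conjugatesOf (x i)) : ℝ) * fixedPointRatio X (x i) := by
  simp only [fixedPointRatio, ← mul_div_assoc, ← Finset.sum_div]
  gcongr
  exact_mod_cast ncard_stabilizer_ne_bot_le hrep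

theorem fixedBy_pi (ι : Type*) (g : G) :
    fixedBy (ι → X) g = Set.univ.pi fun _ => fixedBy X g := by
  ext t
  simp only [mem_fixedBy, funext_iff, Pi.smul_apply, Set.mem_univ_pi]

theorem fixedPointRatio_pi (ι : Type*) [Finite ι] (g : G) :
    fixedPointRatio (ι → X) g = fixedPointRatio X g ^ Nat.card ι := by
  have card_fixedBy : Nat.card (fixedBy (ι → X) g) = Nat.card (fixedBy X g) ^ Nat.card ι := by
    rw [fixedBy_pi, Nat.card_congr (Equiv.Set.univPi _), Nat.card_fun]
  simp only [fixedPointRatio, card_fixedBy, Nat.card_fun, Nat.cast_pow, div_pow]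

theorem stabilizer_pi_ne_bot_iff {ι : Type*} {t : ι → X} :
    stabilizer G t ≠ ⊥ ↔ ∃ g : G, g ≠ 1 ∧ ∀ j, g • t j = t j := by
  simp only [ne_eq, Subgroup.eq_bot_iff_forall, mem_stabilizer_iff, funext_iff, Pi.smul_apply,
    not_forall, exists_prop, and_comm]

end

theorem stmt1_general {G Ω ι κ : Type*} [Group G] [Finite G] [Finite Ω] [MulAction G Ω]
    [Finite ι] [Fintype κ] (x : κ → G)
    (hrep : ∀ g : G, (orderOf g).Prime → ∃ i, IsConj (x i) g) :
    (Nat.card {t : ι → Ω // ∃ g : G, g ≠ 1 ∧ ∀ j, g • t j = t j} : ℝ) /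
        (Nat.card Ω : ℝ) ^ Nat.card ι
      ≤ ∑ i, (Nat.card {g : G // IsConj (x i) g} : ℝ) *
          ((Nat.card (fixedBy Ω (x i)) : ℝ) / (Nat.card Ω : ℝ)) ^ Nat.card ι := by
  have union_bound := card_stabilizer_ne_bot_div_card_le (X := ι → Ω) hrep
  simp only [stabilizer_pi_ne_bot_iff, fixedPointRatio_pi, Nat.card_fun, Nat.cast_pow]
    at union_bound
  exact union_bound

/-- Let `G` be a finite group acting faithfully and transitively on a finite set `Ω`,
let `c ≥ 1`, and let `x 1, …, x k` be representatives of the distinct conjugacy classes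
of elements of prime order in `G`. Then the proportion of `c`-tuples of points of `Ω`
whose pointwise stabilizer is nontrivial (i.e. which are not bases) is at most
`Σ_i |x_i^G| · fpr(x_i)^c`, where `fpr(x) = |Fix_Ω(x)| / |Ω|`. -/
theorem stmt1 {G Ω : Type*} [Group G] [Fintype G] [Fintype Ω] [MulAction G Ω]
    [FaithfulSMul G Ω] (htrans : MulAction.IsPretransitive G Ω)
    (c : ℕ) (hc : 1 ≤ c) (k : ℕ) (x : Fin k → G)
    (hprime : ∀ i, (orderOf (x i)).Prime)
    (hdist : ∀ i j : Fin k, i ≠ j → ¬ IsConj (x i) (x j))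
    (hrep : ∀ g : G, (orderOf g).Prime → ∃ i, IsConj (x i) g) :
    (Nat.card {t : Fin c → Ω // ∃ g : G, g ≠ 1 ∧ ∀ j, g • t j = t j} : ℝ) /
        (Nat.card Ω : ℝ) ^ c
      ≤ ∑ i : Fin k, (Nat.card {g : G // IsConj (x i) g} : ℝ) *
          ((Nat.card (MulAction.fixedBy Ω (x i)) : ℝ) / (Nat.card Ω : ℝ)) ^ c := by
  simpa only [Nat.card_fin] using stmt1_general (Ω := Ω) (ι := Fin c) x hrep
end

section
/- Let G be a finite group acting faithfully on a finite set Ω and let c ≥ 1 be an integer. If Σ_{x ∈ G, x of prime order} |Fix_Ω(x)|^c < |Ω|^c (the sum running over all elements of G whose order is a prime number), then G admits a base of size c; that is, there exist points ω_1, …, ω_c ∈ Ω such that the only element g ∈ G with g·ω_j = ω_j for all j = 1, …, c is the identity. -/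
/-!
A tuple is a base exactly when its stabilizer in the product action is trivial. A nontrivial
finite stabilizer contains an element of prime order, so the tuples in `Ω ^ c` that are not bases
are covered by the sets `Fix(x) ^ c` with `x` of prime order. By the union bound these sets are too
small to exhaust `Ω ^ c`.
-/

open MulAction

theorem exists_pow_orderOf_prime {M : Type*} [Monoid M] {x : M} (hx : IsOfFinOrder x)
    (hx_ne : x ≠ 1) : ∃ n : ℕ, (orderOf (x ^ n)).Prime := by
  obtain ⟨p, hp, hpx⟩ := Nat.exists_prime_and_dvd (mt orderOf_eq_one_iff.mp hx_ne)
  exact ⟨orderOf x / p, by rwa [orderOf_pow_orderOf_div hx.orderOf_pos.ne' hpx]⟩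

section Group

variable {G : Type*} [Group G]

theorem ne_bot_iff_exists_mem_orderOf_prime {H : Subgroup G} (hH : IsMulTorsion H) :
    H ≠ ⊥ ↔ ∃ x ∈ H, (orderOf x).Prime := by
  constructor
  · intro hne
    obtain ⟨x, hx⟩ := H.ne_bot_iff_exists_ne_one.mp hne
    obtain ⟨n, hn⟩ := exists_pow_orderOf_prime (hH x) hx
    exact ⟨x ^ n, (x ^ n).2, by rwa [← Subgroup.coe_pow, Subgroup.orderOf_coe]⟩
  · rintro ⟨x, hxH, hx⟩ rfl
    exact hx.ne_one (orderOf_eq_one_iff.mpr (Subgroup.mem_bot.mp hxH))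

theorem ncard_setOf_stabilizer_ne_bot_le [Fintype G] (X : Type*) [MulAction G X] :
    {x : X | stabilizer G x ≠ ⊥}.ncard ≤
      ∑ g : G with (orderOf g).Prime, Nat.card (fixedBy X g) := by
  have hcover : {x : X | stabilizer G x ≠ ⊥} =
      ⋃ g ∈ Finset.univ.filter fun g : G => (orderOf g).Prime, fixedBy X g := by
    ext x
    simp only [Set.mem_ofPred_eq, ne_bot_iff_exists_mem_orderOf_prime isMulTorsion_of_finite,
      mem_stabilizer_iff, Set.mem_iUnion, Finset.mem_filter_univ, mem_fixedBy, exists_prop,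
      and_comm]
  rw [hcover]
  exact Finset.set_ncard_biUnion_le _ _

end Group

theorem fixedBy_pi_s2 {M ι : Type*} [Monoid M] (X : ι → Type*) [∀ i, MulAction M (X i)] (m : M) :
    fixedBy (∀ i, X i) m = Set.univ.pi fun i => fixedBy (X i) m := by
  ext x
  simp only [mem_fixedBy, funext_iff, Pi.smul_apply, Set.mem_univ_pi]

theorem card_fixedBy_pi {M ι : Type*} [Monoid M] [Fintype ι] (X : ι → Type*)
    [∀ i, MulAction M (X i)] (m : M) :
    Nat.card (fixedBy (∀ i, X i) m) = ∏ i, Nat.card (fixedBy (X i) m) := by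
  rw [fixedBy_pi_s2, Nat.card_congr (Equiv.Set.univPi _), Nat.card_pi]

section Base

variable (G : Type*) [Group G] {ι X : Type*} [MulAction G X]

/-- A base for an action, given as a family of points (repetitions allowed) whose pointwise
stabilizer is trivial. -/
def IsBase (ω : ι → X) : Prop :=
  ∀ g : G, (∀ i, g • ω i = ω i) → g = 1

theorem isBase_iff_stabilizer_eq_bot {ω : ι → X} : IsBase G ω ↔ stabilizer G ω = ⊥ := by
  simp only [IsBase, Subgroup.eq_bot_iff_forall, mem_stabilizer_iff, funext_iff, Pi.smul_apply]

variable (ι X) in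
theorem ncard_setOf_not_isBase_le [Fintype G] [Fintype ι] :
    {ω : ι → X | ¬ IsBase G ω}.ncard ≤
      ∑ g : G with (orderOf g).Prime, Nat.card (fixedBy X g) ^ Fintype.card ι := by
  simpa only [isBase_iff_stabilizer_eq_bot, card_fixedBy_pi, Finset.prod_const, Finset.card_univ]
    using ncard_setOf_stabilizer_ne_bot_le (G := G) (ι → X)

end Base

/-- Let `G` be a finite group acting faithfully on a finite set `Ω` and `c ≥ 1`.
If `Σ_{x ∈ G of prime order} |Fix_Ω(x)|^c < |Ω|^c`, then `G` admits a base of size `c`: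
there are points `ω 1, …, ω c` such that the only `g ∈ G` fixing all of them is `1`. -/
theorem stmt2 {G Ω : Type*} [Group G] [Fintype G] [Fintype Ω] [MulAction G Ω]
    [FaithfulSMul G Ω] (c : ℕ) (hc : 1 ≤ c)
    (h : ∑ x ∈ Finset.univ.filter (fun x : G => (orderOf x).Prime),
          (Nat.card (MulAction.fixedBy Ω x)) ^ c < (Nat.card Ω) ^ c) :
    ∃ ω : Fin c → Ω, ∀ g : G, (∀ j, g • ω j = ω j) → g = 1 := by
  change ∃ ω : Fin c → Ω, IsBase G ω
  by_contra! hnone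
  have hbound := ncard_setOf_not_isBase_le G (Fin c) Ω
  rw [Set.eq_univ_of_forall (s := {ω : Fin c → Ω | ¬ IsBase G ω}) hnone, Set.ncard_univ,
    Nat.card_fun, Nat.card_fin, Fintype.card_fin] at hbound
  exact h.not_ge hbound
end

section
/- Let F be a field with at least 3 elements and let V be an F-vector space of finite dimension n ≥ 2. Then for every choice of n one-dimensional subspaces L_1, …, L_n of V there exists a non-scalar g ∈ GL(V) (i.e. g is not of the form λ·id_V for any λ ∈ F) with g(L_i) = L_i for all i = 1, …, n. (Consequently, no n points of the projective space of V form a base for PGL(V), so together with the existence of n+1 such points the base size of PGL_n(q) in its natural action on the points of the projective space is n+1 for q ≥ 3.) -/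
/-!
The lines `L i` with `i ≠ i₀` span a proper subspace `W`. Choose `u ∉ W` spanning `L i₀`, or any
`u ∉ W` if `L i₀ ≤ W`, and a functional `f` vanishing on `W` with `f u = 1`. For `a ≠ 0, 1` the
homology `x ↦ x + f x • (a - 1) • u` is the identity on `ker f` and multiplies `u` by `a`, so it
preserves every `L i`; it is not scalar because `ker f ≠ 0` in dimension at least two.
-/

open Module Submodule

section Homology

variable {R V : Type*} [Ring R] [AddCommGroup V] [Module R V] {f : Dual R V} {u : V}

/-- The homology of projective geometry with axis `ker f`, centre `u` and multiplier `a`: the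
linear automorphism that is the identity on `ker f` and multiplies `u` by `a`, where the functional
`f` is normalised by `f u = 1`. -/
noncomputable def axialHomology (hu : f u = 1) (a : Rˣ) : V ≃ₗ[R] V :=
  LinearEquiv.dilatransvection (f := f) (v := ((a : R) - 1) • u) (by simp [hu])

theorem axialHomology_apply (hu : f u = 1) (a : Rˣ) (x : V) :
    axialHomology hu a x = x + f x • ((a : R) - 1) • u :=
  LinearEquiv.dilatransvection.apply

theorem axialHomology_apply_center (hu : f u = 1) (a : Rˣ) : axialHomology hu a u = a • u := by
  rw [axialHomology_apply, hu, one_smul, sub_smul, one_smul, add_sub_cancel, Units.smul_def]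

theorem axialHomology_apply_of_mem_ker (hu : f u = 1) (a : Rˣ) {x : V}
    (hx : x ∈ LinearMap.ker f) : axialHomology hu a x = x := by
  rw [axialHomology_apply, LinearMap.mem_ker.1 hx, zero_smul, add_zero]

theorem ker_le_fixedSubmodule_axialHomology (hu : f u = 1) (a : Rˣ) :
    LinearMap.ker f ≤ (axialHomology hu a : V →ₗ[R] V).fixedSubmodule :=
  fun _ => axialHomology_apply_of_mem_ker hu a

theorem map_axialHomology_span_center (hu : f u = 1) (a : Rˣ) :
    (span R {u}).map (axialHomology hu a : V →ₗ[R] V) = span R {u} := by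
  rw [map_span, Set.image_singleton, LinearEquiv.coe_coe, axialHomology_apply_center,
    span_singleton_group_smul_eq]

theorem not_exists_axialHomology_eq_smul [IsCancelMulZero R] [IsTorsionFree R V] (hu : f u = 1)
    (hf : LinearMap.ker f ≠ ⊥) {a : Rˣ} (ha : a ≠ 1) :
    ¬ ∃ l : R, ∀ v : V, axialHomology hu a v = l • v := by
  rintro ⟨l, hl⟩
  obtain ⟨w, hw, hw0⟩ := exists_mem_ne_zero_of_ne_bot hf
  have l_eq_one : l = 1 := smul_left_injective R hw0 <| by
    simpa only [one_smul, ← hl] using axialHomology_apply_of_mem_ker hu a hw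
  have l_eq_a : l = a := by
    simpa [axialHomology_apply_center, Units.smul_def, hu] using congrArg f (hl u).symm
  exact ha (Units.ext (l_eq_a.symm.trans l_eq_one))

end Homology

theorem ker_dual_ne_bot_of_one_lt_rank {R V : Type*} [Ring R] [StrongRankCondition R]
    [AddCommGroup V] [Module R V] (hV : 1 < Module.rank R V) (f : Dual R V) :
    LinearMap.ker f ≠ ⊥ := fun hf => by
  have h := LinearMap.lift_rank_le_of_injective f (LinearMap.ker_eq_bot.1 hf)
  rw [rank_self, Cardinal.lift_one, Cardinal.lift_le_one_iff] at h
  exact h.not_gt hV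

theorem iSup_lt_top_of_card_lt_rank {R V ι : Type*} [Ring R] [StrongRankCondition R]
    [AddCommGroup V] [Module R V] [Finite ι] (hι : (Nat.card ι : Cardinal) < Module.rank R V)
    {L : ι → Submodule R V} (hL : ∀ i, (L i).IsPrincipal) : ⨆ i, L i < ⊤ := by
  choose v hv using fun i => (hL i).principal
  have iSup_eq_span : ⨆ i, L i = span R (Set.range v) := by
    rw [span_range_eq_iSup, iSup_congr hv]
  refine lt_top_iff_ne_top.2 fun h => hι.not_ge ?_
  calc Module.rank R V = Module.rank R (span R (Set.range v)) := by
        rw [← iSup_eq_span, h, rank_top]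
    _ ≤ Cardinal.mk (Set.range v) := rank_span_le _
    _ = Nat.card (Set.range v) := Nat.cast_card.symm
    _ ≤ Nat.card ι := Nat.cast_le.2 (Finite.card_range_le v)

theorem map_eq_of_le_fixedSubmodule {R V : Type*} [Semiring R] [AddCommMonoid V] [Module R V]
    {g : V →ₗ[R] V} {p : Submodule R V} (hp : p ≤ g.fixedSubmodule) : p.map g = p :=
  SetLike.coe_injective <| (Set.image_congr hp).trans (Set.image_id _)

theorem exists_notMem_le_or_eq_span_singleton {R V : Type*} [Semiring R] [AddCommMonoid V]
    [Module R V] {W L : Submodule R V} (hW : W < ⊤) (hL : L.IsPrincipal) :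
    ∃ u ∉ W, L ≤ W ∨ L = span R {u} := by
  by_cases hLW : L ≤ W
  · obtain ⟨u, -, hu⟩ := SetLike.exists_of_lt hW
    exact ⟨u, hu, Or.inl hLW⟩
  · obtain ⟨u, rfl⟩ := hL.principal
    exact ⟨u, fun hu => hLW ((span_singleton_le_iff_mem u W).2 hu), Or.inr rfl⟩

section DivisionRing

variable {K V : Type*} [DivisionRing K] [AddCommGroup V] [Module K V]

theorem exists_dual_eq_one_le_ker {W : Submodule K V} {u : V} (hu : u ∉ W) :
    ∃ f : Dual K V, f u = 1 ∧ W ≤ LinearMap.ker f := by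
  obtain ⟨f, hfW, hfu⟩ := LinearMap.exists_extend_of_notMem (0 : W →ₗ[K] K) hu 1
  exact ⟨f, hfu, fun x hx => by simpa using LinearMap.congr_fun hfW ⟨x, hx⟩⟩

theorem exists_nonscalar_le_fixedSubmodule_and_map_eq (hK : ∃ a : K, a ≠ 0 ∧ a ≠ 1)
    (hV : 1 < Module.rank K V) {W L : Submodule K V} (hW : W < ⊤) (hL : L.IsPrincipal) :
    ∃ g : V ≃ₗ[K] V, W ≤ (g : V →ₗ[K] V).fixedSubmodule ∧ L.map (g : V →ₗ[K] V) = L ∧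
      ¬ ∃ l : K, ∀ v : V, g v = l • v := by
  obtain ⟨a, ha0, ha1⟩ := hK
  obtain ⟨u, huW, hLu⟩ := exists_notMem_le_or_eq_span_singleton hW hL
  obtain ⟨f, hfu, hWf⟩ := exists_dual_eq_one_le_ker huW
  let g := axialHomology hfu (Units.mk0 a ha0)
  have hWg : W ≤ (g : V →ₗ[K] V).fixedSubmodule :=
    hWf.trans (ker_le_fixedSubmodule_axialHomology hfu _)
  refine ⟨g, hWg, ?_, not_exists_axialHomology_eq_smul hfu (ker_dual_ne_bot_of_one_lt_rank hV f) ?_⟩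
  · rcases hLu with hLW | rfl
    · exact map_eq_of_le_fixedSubmodule (hLW.trans hWg)
    · exact map_axialHomology_span_center hfu _
  · simpa [Units.ext_iff] using ha1

theorem stmt8_general {ι : Type*} [Finite ι] (hK : ∃ a : K, a ≠ 0 ∧ a ≠ 1)
    (hV : 1 < Module.rank K V) (hι : Nat.card ι ≤ Module.rank K V)
    (L : ι → Submodule K V) (hL : ∀ i, (L i).IsPrincipal) :
    ∃ g : V ≃ₗ[K] V, (∀ i, (L i).map (g : V →ₗ[K] V) = L i) ∧
      ¬ ∃ l : K, ∀ v : V, g v = l • v := by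
  obtain _ | ⟨⟨i₀⟩⟩ := isEmpty_or_nonempty ι
  · have : Nontrivial V := rank_pos_iff_nontrivial.1 (zero_lt_one.trans hV)
    obtain ⟨g, -, -, hg⟩ :=
      exists_nonscalar_le_fixedSubmodule_and_map_eq hK hV bot_lt_top bot_isPrincipal
    exact ⟨g, isEmptyElim, hg⟩
  have card_lt : Nat.card {i // i ≠ i₀} < Nat.card ι :=
    Finite.card_subtype_lt (x := i₀) (not_not.2 rfl)
  have hW : ⨆ i : {i // i ≠ i₀}, L i < ⊤ :=
    iSup_lt_top_of_card_lt_rank ((Nat.cast_lt.2 card_lt).trans_le hι) fun i => hL i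
  obtain ⟨g, hgW, hgL, hg⟩ := exists_nonscalar_le_fixedSubmodule_and_map_eq hK hV hW (hL i₀)
  refine ⟨g, fun i => ?_, hg⟩
  obtain rfl | hi := eq_or_ne i i₀
  · exact hgL
  · exact map_eq_of_le_fixedSubmodule <|
      (le_iSup (fun j : {j // j ≠ i₀} => L j) ⟨i, hi⟩).trans hgW

end DivisionRing

/-- Let `F` be a field with at least 3 elements (i.e. having an element `a ≠ 0, 1`)
and let `V` be an `F`-vector space of finite dimension `n ≥ 2`. Then for every choice
of `n` one-dimensional subspaces `L 1, …, L n` of `V` there exists a non-scalar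
`g ∈ GL(V)` with `g (L i) = L i` for all `i`. -/
theorem stmt8 {F V : Type*} [Field F] [AddCommGroup V] [Module F V]
    [FiniteDimensional F V] (hF : ∃ a : F, a ≠ 0 ∧ a ≠ 1)
    (n : ℕ) (hn : 2 ≤ n) (hdim : Module.finrank F V = n)
    (L : Fin n → Submodule F V) (hL : ∀ i, Module.finrank F (L i) = 1) :
    ∃ g : V ≃ₗ[F] V, (∀ i, Submodule.map (g : V →ₗ[F] V) (L i) = L i) ∧
      ¬ ∃ l : F, ∀ v : V, g v = l • v :=
  stmt8_general hF (by rw [← finrank_eq_rank, hdim]; exact_mod_cast hn)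
    (by rw [← finrank_eq_rank, hdim, Nat.card_fin]) L
    fun i => (finrank_le_one_iff_isPrincipal (L i)).1 (hL i).le
end

section
/- Let A = {i ∈ Fin 8 : i < 4} (a 4-element subset of an 8-element set) and let H be the subgroup of the symmetric group Sym(Fin 8) consisting of all permutations σ with σ(A) = A or σ(A) = Aᶜ (so H is the stabilizer of the partition {A, Aᶜ} of Fin 8 into two 4-element subsets, isomorphic to the wreath product S_4 ≀ S_2, of order 1152). Then for all x_1, x_2, x_3 ∈ Sym(Fin 8), the intersection H ∩ x_1 H x_1^{-1} ∩ x_2 H x_2^{-1} ∩ x_3 H x_3^{-1} is a nontrivial subgroup. In particular, at least 5 conjugates of H are needed to obtain trivial intersection in S_8. -/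
/-!
The conjugate `x H x⁻¹` is the stabilizer of the bipartition `{x(A), x(A)ᶜ}`. Label each of the
eight points by the vector in `𝔽₂⁴` recording on which side of each of the four bipartitions it
lies. If two points have the same label, transpose them. Otherwise the labels form an 8-element set
`S`, whose sum is zero because the sides have even size, and it suffices to find `w ≠ 0` with
`S + w = S`: the permutation induced by translation by `w` fixes or swaps the sides of each
bipartition.

Let `r v = #(S ∩ (S + v))`, which is the self-convolution of `S` since `v = -v`. If `r w > 4` for
some `w ≠ 0`, then at most one pair of points of `S` is moved out of `S` by `w`, and the vanishing
of the sum of `S` rules such a pair out, so `S + w = S`. Suppose therefore that `r v ≤ 4` for all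
`v ≠ 0`. Summing `r` over the kernel of a functional `φ ≠ 0` bounds the imbalance of `S` between
the kernel and its complement, and parity then shows that `φ` splits `S` evenly. Hence the eight
values of `r` off the kernel add up to `2 * 4 * 4 = 8 * 4`, so all of them are `4`. As every `v ≠ 0`
is off the kernel of some `φ`, this gives `∑ v, r v = 8 + 15 * 4 = 68`, whereas this sum is
`8 * 8 = 64`.
-/

open Finset MulAction
open scoped Pointwise

lemma sum_addConvolution {G : Type*} [AddGroup G] [DecidableEq G] (A B t : Finset G) :
    ∑ v ∈ t, A.addConvolution B v = #{p ∈ A ×ˢ B | p.1 + p.2 ∈ t} :=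
  sum_card_fiberwise_eq_card_filter _ _ _

lemma zmod_two_add_eq_zero_iff (a b : ZMod 2) : a + b = 0 ↔ (a = 0 ↔ b = 0) := by
  decide +revert

section ElementaryAbelian

variable {V : Type*} [AddCommGroup V] [Module (ZMod 2) V]

lemma exists_linearMap_apply_ne_zero {v : V} (hv : v ≠ 0) : ∃ φ : V →ₗ[ZMod 2] ZMod 2, φ v ≠ 0 := by
  by_contra! h
  exact hv ((Module.forall_dual_apply_eq_zero_iff (ZMod 2) v).mp h)

lemma nsmul_eq_self_of_odd {n : ℕ} (hn : Odd n) (v : V) : n • v = v := by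
  obtain ⟨k, rfl⟩ := hn
  rw [succ_nsmul, mul_nsmul, ZModModule.char_nsmul_eq_zero 2, smul_zero, zero_add]

lemma even_card_filter_apply_ne_zero {S : Finset V} (hS : ∑ s ∈ S, s = 0)
    (φ : V →ₗ[ZMod 2] ZMod 2) : Even #{s ∈ S | φ s ≠ 0} := by
  have eq_indicator (a : ZMod 2) : a = if a ≠ 0 then 1 else 0 := by decide +revert
  rw [← ZMod.natCast_eq_zero_iff_even, natCast_card_filter]
  calc ∑ s ∈ S, (if φ s ≠ 0 then 1 else 0) = ∑ s ∈ S, φ s :=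
        sum_congr rfl fun s _ => (eq_indicator (φ s)).symm
    _ = 0 := by rw [← map_sum, hS, map_zero]

section Invariant

variable {φ : V →ₗ[ZMod 2] ZMod 2} {U : Finset V} {w : V}

lemma card_eq_two_mul_card_filter_apply_eq_zero (hU : ∀ u ∈ U, u + w ∈ U) (hw : φ w ≠ 0) :
    #U = 2 * #{u ∈ U | φ u = 0} := by
  have translate : #{u ∈ U | φ u ≠ 0} = #{u ∈ U | φ u = 0} := by
    refine card_nbij' (· + w) (· + w) ?_ ?_ ?_ ?_ <;> intro u <;>
      simp +contextual [zmod_two_add_eq_zero_iff, hU, hw, add_assoc, ZModModule.add_self]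
  rw [← card_filter_add_card_filter_not (φ · = 0), translate, two_mul]

lemma sum_eq_card_filter_apply_eq_zero_nsmul (hU : ∀ u ∈ U, u + w ∈ U) (hw : φ w ≠ 0) :
    ∑ u ∈ U, u = #{u ∈ U | φ u = 0} • w := by
  have translate : ∑ u ∈ U with φ u ≠ 0, u = ∑ u ∈ U with φ u = 0, (u + w) := by
    refine sum_nbij' (· + w) (· + w) ?_ ?_ ?_ ?_ ?_ <;> intro u <;>
      simp +contextual [zmod_two_add_eq_zero_iff, hU, hw, add_assoc, ZModModule.add_self]
  rw [← sum_filter_add_sum_filter_not U (φ · = 0), translate, ← sum_add_distrib]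
  simp only [← add_assoc, ZModModule.add_self, zero_add, sum_const]

end Invariant

lemma card_eq_two_mul_card_ker [Fintype V] {φ : V →ₗ[ZMod 2] ZMod 2} (hφ : φ ≠ 0) :
    Fintype.card V = 2 * #{v | φ v = 0} := by
  obtain ⟨w, hw⟩ := DFunLike.ne_iff.mp hφ
  exact card_eq_two_mul_card_filter_apply_eq_zero (fun _ _ => mem_univ _) hw

section Convolution

variable [DecidableEq V] {S : Finset V}

lemma addConvolution_self_eq_card_filter (S : Finset V) (v : V) :
    S.addConvolution S v = #{s ∈ S | s + v ∈ S} := by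
  rw [← card_inter_vadd_neg, ← filter_mem_eq_inter]
  refine congrArg card (filter_congr fun s _ => ?_)
  rw [← neg_vadd_mem_iff, mem_neg', vadd_eq_add, ZModModule.neg_eq_self, ZModModule.neg_eq_self,
    add_comm]

lemma addConvolution_self_zero (S : Finset V) : S.addConvolution S 0 = #S := by
  simp [addConvolution_self_eq_card_filter]

lemma add_mem_of_card_lt_addConvolution {w : V} (hS : ∑ s ∈ S, s = 0) (h4 : 4 ∣ #S) (hw : w ≠ 0)
    (hlt : #S < S.addConvolution S w + 4) {s : V} (hs : s ∈ S) : s + w ∈ S := by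
  obtain ⟨φ, hφ⟩ := exists_linearMap_apply_ne_zero hw
  let U := {s ∈ S | s + w ∈ S}
  let T := {s ∈ S | s + w ∉ S}
  have hU : ∀ u ∈ U, u + w ∈ U := by
    simp +contextual [U, add_assoc, ZModModule.add_self]
  have hU_card : #U = 2 * #{u ∈ U | φ u = 0} := card_eq_two_mul_card_filter_apply_eq_zero hU hφ
  have hcard : #U + #T = #S := card_filter_add_card_filter_not _
  rw [addConvolution_self_eq_card_filter] at hlt
  change #S < #U + 4 at hlt
  have hT : #T ≠ 2 := by
    intro hT
    obtain ⟨a, b, hne, hab⟩ := card_eq_two.mp hT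
    have hodd : Odd #{u ∈ U | φ u = 0} := by rw [Nat.odd_iff]; lia
    have hsum : w + (a + b) = 0 := by
      rw [← sum_pair (f := fun t => t) hne, ← hab, ← nsmul_eq_self_of_odd hodd w,
        ← sum_eq_card_filter_apply_eq_zero_nsmul hU hφ, sum_filter_add_sum_filter_not, hS]
    have haw : a + w = b := by
      rw [← ZModModule.sub_eq_add, sub_eq_zero] at hsum
      rw [hsum, ← add_assoc, ZModModule.add_self, zero_add]
    have ha : a ∈ T := by simp [hab]
    have hb : b ∈ T := by simp [hab]
    exact (mem_filter.mp ha).2 (haw ▸ (mem_filter.mp hb).1)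
  have hT_empty : T = ∅ := by rw [← card_eq_zero]; lia
  by_contra hsw
  exact notMem_empty s (hT_empty ▸ mem_filter.mpr ⟨hs, hsw⟩)

variable [Fintype V]

lemma sum_ker_addConvolution_self (S : Finset V) (φ : V →ₗ[ZMod 2] ZMod 2) :
    ∑ v with φ v = 0, S.addConvolution S v = #{s ∈ S | φ s = 0} ^ 2 + #{s ∈ S | φ s ≠ 0} ^ 2 := by
  rw [sum_addConvolution, sq, sq, ← filter_product_card]
  simp only [mem_filter_univ, map_add, zmod_two_add_eq_zero_iff, eq_iff_iff]

lemma sum_compl_ker_addConvolution_self (S : Finset V) (φ : V →ₗ[ZMod 2] ZMod 2) :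
    ∑ v with φ v ≠ 0, S.addConvolution S v = 2 * (#{s ∈ S | φ s = 0} * #{s ∈ S | φ s ≠ 0}) := by
  have hiff (a b : ZMod 2) : a + b ≠ 0 ↔ (a = 0 ↔ b ≠ 0) := by decide +revert
  have hcount := filter_product_card S S (φ · = 0) (φ · ≠ 0)
  simp only [not_not, eq_iff_iff] at hcount
  simp only [sum_addConvolution, mem_filter_univ, map_add, hiff, hcount]
  ring

lemma sq_card_filter_sub_card_filter_le_card (hV : Fintype.card V = 2 * #S)
    (hle : ∀ v ≠ 0, 2 * S.addConvolution S v ≤ #S) {φ : V →ₗ[ZMod 2] ZMod 2} (hφ : φ ≠ 0) :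
    (#{s ∈ S | φ s = 0} - #{s ∈ S | φ s ≠ 0} : ℤ) ^ 2 ≤ #S := by
  have hker : #{v | φ v = 0} = #S := by have := card_eq_two_mul_card_ker hφ; lia
  have hsum : 2 * (#{s ∈ S | φ s = 0} ^ 2 + #{s ∈ S | φ s ≠ 0} ^ 2) ≤ #S * #S + #S :=
    calc 2 * (#{s ∈ S | φ s = 0} ^ 2 + #{s ∈ S | φ s ≠ 0} ^ 2)
        = ∑ v with φ v = 0, 2 * S.addConvolution S v := by
          rw [← sum_ker_addConvolution_self, mul_sum]
      _ ≤ ∑ v with φ v = 0, (#S + if v = 0 then #S else 0) := by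
          refine sum_le_sum fun v _ => ?_
          split_ifs with hv
          · rw [hv, addConvolution_self_zero, two_mul]
          · exact hle v hv
      _ = #S * #S + #S := by simp [sum_add_distrib, hker]
  have hsplit : #{s ∈ S | φ s = 0} + #{s ∈ S | φ s ≠ 0} = #S :=
    card_filter_add_card_filter_not _
  zify at hsum hsplit
  rw [← hsplit] at hsum ⊢
  linarith

lemma two_mul_addConvolution_eq_card (hV : Fintype.card V = 2 * #S)
    (hle : ∀ v ≠ 0, 2 * S.addConvolution S v ≤ #S) {φ : V →ₗ[ZMod 2] ZMod 2}
    (hbal : #{s ∈ S | φ s = 0} = #{s ∈ S | φ s ≠ 0}) {v : V} (hv : φ v ≠ 0) :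
    2 * S.addConvolution S v = #S := by
  have hφ : φ ≠ 0 := DFunLike.ne_iff.mpr ⟨v, hv⟩
  have hker : #{v | φ v = 0} + #{v | φ v ≠ 0} = Fintype.card V :=
    card_filter_add_card_filter_not _
  have hcompl : #{v | φ v ≠ 0} = #S := by have := card_eq_two_mul_card_ker hφ; lia
  have hsplit : #{s ∈ S | φ s = 0} + #{s ∈ S | φ s ≠ 0} = #S :=
    card_filter_add_card_filter_not _
  have hsum : ∑ u with φ u ≠ 0, 2 * S.addConvolution S u = ∑ u with φ u ≠ 0, #S := by
    rw [← mul_sum, sum_compl_ker_addConvolution_self, sum_const, hcompl, smul_eq_mul, ← hsplit,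
      ← hbal]
    ring
  have hle' : ∀ u ∈ ({u | φ u ≠ 0} : Finset V), 2 * S.addConvolution S u ≤ #S := by
    intro u hu
    exact hle u fun h => (mem_filter.mp hu).2 (h ▸ map_zero φ)
  exact (sum_eq_sum_iff_of_le hle').mp hsum v (mem_filter.mpr ⟨mem_univ v, hv⟩)

lemma exists_card_lt_two_mul_addConvolution (hV : Fintype.card V = 2 * #S) (hS : S.Nonempty)
    (hbal : ∀ φ : V →ₗ[ZMod 2] ZMod 2, φ ≠ 0 → #{s ∈ S | φ s = 0} = #{s ∈ S | φ s ≠ 0}) :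
    ∃ v ≠ 0, #S < 2 * S.addConvolution S v := by
  by_contra! hle
  have heq (v : V) (hv : v ≠ 0) : 2 * S.addConvolution S v = #S := by
    obtain ⟨φ, hφ⟩ := exists_linearMap_apply_ne_zero hv
    exact two_mul_addConvolution_eq_card hV hle (hbal φ (DFunLike.ne_iff.mpr ⟨v, hφ⟩)) hφ
  have hsum : 2 * (#S * #S) = 2 * #S * #S + #S :=
    calc 2 * (#S * #S) = ∑ v, 2 * S.addConvolution S v := by
          rw [← mul_sum, sum_addConvolution, ← card_product]
          simp only [mem_univ, filter_true]
      _ = ∑ v : V, (#S + if v = 0 then #S else 0) := by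
          refine sum_congr rfl fun v _ => ?_
          split_ifs with hv
          · rw [hv, addConvolution_self_zero, two_mul]
          · exact heq v hv
      _ = 2 * #S * #S + #S := by simp [sum_add_distrib, hV]
  have := hS.card_pos
  lia

end Convolution

variable [Fintype V]

theorem exists_ne_zero_forall_add_mem {S : Finset V} (hV : Fintype.card V = 16) (hS : #S = 8)
    (hsum : ∑ s ∈ S, s = 0) : ∃ w ≠ 0, ∀ s ∈ S, s + w ∈ S := by
  classical
  have hV' : Fintype.card V = 2 * #S := by rw [hV, hS]
  have hne : S.Nonempty := card_pos.mp (by lia)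
  suffices hlarge : ∃ w ≠ 0, #S < 2 * S.addConvolution S w by
    obtain ⟨w, hw, hlt⟩ := hlarge
    exact ⟨w, hw, fun s => add_mem_of_card_lt_addConvolution hsum (by lia) hw (by lia)⟩
  by_contra! hle
  have hbal (φ : V →ₗ[ZMod 2] ZMod 2) (hφ : φ ≠ 0) :
      #{s ∈ S | φ s = 0} = #{s ∈ S | φ s ≠ 0} := by
    have hsplit : #{s ∈ S | φ s = 0} + #{s ∈ S | φ s ≠ 0} = #S :=
      card_filter_add_card_filter_not _
    have hdvd : (4 : ℤ) ∣ #{s ∈ S | φ s = 0} - #{s ∈ S | φ s ≠ 0} := by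
      obtain ⟨k, hk⟩ := even_card_filter_apply_ne_zero hsum φ
      lia
    have habs : |(#{s ∈ S | φ s = 0} - #{s ∈ S | φ s ≠ 0} : ℤ)| < 4 := by
      refine abs_lt_of_sq_lt_sq ?_ (by lia)
      exact (sq_card_filter_sub_card_filter_le_card hV' hle hφ).trans_lt (by lia)
    have := Int.eq_zero_of_abs_lt_dvd hdvd habs
    lia
  obtain ⟨v, hv, hlt⟩ := exists_card_lt_two_mul_addConvolution hV' hne hbal
  exact (hle v hv).not_gt hlt

theorem exists_perm_ne_one_forall_apply_eq_add {α : Type*} [Fintype α]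
    (hα : Fintype.card α = 8) (hV : Fintype.card V = 16) {c : α → V} (hc : ∑ a, c a = 0) :
    ∃ g : Equiv.Perm α, g ≠ 1 ∧ ∃ w, ∀ a, c (g a) = c a + w := by
  classical
  by_cases hinj : Function.Injective c
  · have hS : ∑ s ∈ univ.image c, s = 0 := by rwa [sum_image hinj.injOn]
    obtain ⟨w, hw, hmem⟩ := exists_ne_zero_forall_add_mem hV
      (by rw [card_image_of_injective _ hinj, card_univ, hα]) hS
    have hex (a : α) : ∃ b, c b = c a + w := by simpa using hmem (c a) (by simp)
    choose f hf using hex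
    have hinv : Function.Involutive f := fun a => hinj <| by
      rw [hf, hf, add_assoc, ZModModule.add_self, add_zero]
    obtain ⟨a⟩ : Nonempty α := Fintype.card_pos_iff.mp (by lia)
    refine ⟨hinv.toPerm, fun h => hw ?_, w, hf⟩
    have hfa : f a = a := congrArg (fun g : Equiv.Perm α => g a) h
    simpa [hfa] using hf a
  · obtain ⟨a, b, hab, hne⟩ := Function.not_injective_iff.mp hinj
    refine ⟨Equiv.swap a b, mt Equiv.swap_eq_one_iff.mp hne, 0, fun x => ?_⟩
    rw [add_zero, Equiv.apply_swap_eq_self hab]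

end ElementaryAbelian

section Bipartition

/-- The group of permutations that preserve the bipartition `{A, Aᶜ}`, possibly swapping its two
parts. -/
def bipartitionStabilizer {α : Type*} (A : Set α) : Subgroup (Equiv.Perm α) :=
  stabilizer (Equiv.Perm α) ({A, Aᶜ} : Set (Set α))

variable {α : Type*} {A : Set α} {g : Equiv.Perm α}

lemma mem_bipartitionStabilizer_iff :
    g ∈ bipartitionStabilizer A ↔ g '' A = A ∨ g '' A = Aᶜ := by
  have hsmul : g • ({A, Aᶜ} : Set (Set α)) = {g '' A, (g '' A)ᶜ} := by
    rw [Set.smul_set_insert, Set.smul_set_singleton, Set.smul_set_compl]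
    rfl
  rw [bipartitionStabilizer, mem_stabilizer_iff, hsmul]
  refine ⟨fun h => h.subset (Set.mem_insert _ _), ?_⟩
  rintro (h | h)
  · rw [h]
  · rw [h, compl_compl, Set.pair_comm]

lemma bipartitionStabilizer_smul (x : Equiv.Perm α) (A : Set α) :
    bipartitionStabilizer (x • A) =
      (bipartitionStabilizer A).map (MulAut.conj x).toMonoidHom := by
  rw [bipartitionStabilizer, bipartitionStabilizer, ← stabilizer_smul_eq_stabilizer_map_conj,
    Set.smul_set_insert, Set.smul_set_singleton, Set.smul_set_compl]

lemma mem_bipartitionStabilizer_of_indicator {w : ZMod 2}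
    (h : ∀ a, A.indicator 1 (g a) = A.indicator 1 a + w) : g ∈ bipartitionStabilizer A := by
  rw [mem_bipartitionStabilizer_iff]
  have image_eq {B : Set α} (hB : ∀ a, g a ∈ B ↔ a ∈ A) : g '' A = B := by
    have hpre : Set.preimage g B = A := Set.ext hB
    rw [← hpre, Set.image_preimage_eq B g.surjective]
  have eq_zero_or_one : ∀ b : ZMod 2, b = 0 ∨ b = 1 := by decide
  obtain rfl | rfl := eq_zero_or_one w
  · refine .inl (image_eq fun a => ?_)
    rw [← Set.indicator_eq_one_iff_mem (ZMod 2), h, add_zero, Set.indicator_eq_one_iff_mem]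
  · refine .inr (image_eq fun a => ?_)
    rw [Set.mem_compl_iff, ← Set.indicator_eq_one_iff_mem (ZMod 2), h, add_eq_right,
      Set.indicator_apply_eq_zero]
    simp

end Bipartition

theorem stmt10_general {α : Type*} [Fintype α] (hα : Fintype.card α = 8) {A : Fin 4 → Set α}
    (hA : ∀ i, Even (A i).ncard) :
    ∃ g : Equiv.Perm α, g ≠ 1 ∧ ∀ i, g ∈ bipartitionStabilizer (A i) := by
  classical
  let c (a : α) (i : Fin 4) : ZMod 2 := (A i).indicator 1 a
  have hc : ∑ a, c a = 0 := by
    ext i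
    rw [Finset.sum_apply, Pi.zero_apply, ← (ZMod.natCast_eq_zero_iff_even.mpr (hA i)),
      Set.ncard_eq_toFinset_card', ← Set.filter_mem_univ_eq_toFinset, natCast_card_filter]
    exact sum_congr rfl fun a _ => Set.indicator_apply _ _ _
  obtain ⟨g, hg, w, hw⟩ := exists_perm_ne_one_forall_apply_eq_add hα (by simp) hc
  exact ⟨g, hg, fun i => mem_bipartitionStabilizer_of_indicator fun a => congrFun (hw a) i⟩

/-- Let `A = {i ∈ Fin 8 : i < 4}` and let `H` be the subgroup of `Sym(Fin 8)` of all
permutations `σ` with `σ(A) = A` or `σ(A) = Aᶜ` (the stabilizer of the partition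
`{A, Aᶜ}`, isomorphic to `S₄ ≀ S₂`). Then for all `x₁, x₂, x₃ ∈ Sym(Fin 8)` the
intersection `H ∩ x₁Hx₁⁻¹ ∩ x₂Hx₂⁻¹ ∩ x₃Hx₃⁻¹` is nontrivial; in particular at
least 5 conjugates of `H` are needed to obtain trivial intersection in `S₈`. -/
theorem stmt10 (H : Subgroup (Equiv.Perm (Fin 8)))
    (hH : ∀ σ : Equiv.Perm (Fin 8), σ ∈ H ↔
      (⇑σ '' {i : Fin 8 | (i : ℕ) < 4} = {i : Fin 8 | (i : ℕ) < 4} ∨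
        ⇑σ '' {i : Fin 8 | (i : ℕ) < 4} = {i : Fin 8 | (i : ℕ) < 4}ᶜ))
    (x₁ x₂ x₃ : Equiv.Perm (Fin 8)) :
    ∃ g : Equiv.Perm (Fin 8), g ≠ 1 ∧
      g ∈ H ⊓ Subgroup.map (MulAut.conj x₁).toMonoidHom H ⊓
        Subgroup.map (MulAut.conj x₂).toMonoidHom H ⊓
          Subgroup.map (MulAut.conj x₃).toMonoidHom H := by
  obtain rfl : H = bipartitionStabilizer {i : Fin 8 | (i : ℕ) < 4} :=
    Subgroup.ext fun σ => (hH σ).trans mem_bipartitionStabilizer_iff.symm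
  have hcard : {i : Fin 8 | (i : ℕ) < 4}.ncard = 4 := by
    rw [Set.ncard_eq_toFinset_card']; rfl
  obtain ⟨g, hg, hmem⟩ := stmt10_general (Fintype.card_fin 8)
    (A := fun j => ![1, x₁, x₂, x₃] j • {i : Fin 8 | (i : ℕ) < 4})
    (fun j => by rw [Set.ncard_smul_set, hcard]; decide)
  exact ⟨g, hg, by simpa [bipartitionStabilizer_smul, Fin.forall_fin_succ, and_assoc] using hmem⟩
end

section
/- Let F be a finite field of characteristic 2 with |F| = q. Then the number of elements of order 2 in the special linear group SL_2(F) (i.e. the number of matrices x ∈ SL_2(F) with x ≠ 1 and x² = 1) equals q² − 1. -/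
/-!
An element `x` of `SL₂` satisfies `x² = 1` exactly when `x = x⁻¹`. Inverting a `2 × 2` matrix of
determinant `1` swaps its diagonal entries and negates the other two, and negation is trivial in
characteristic 2, so `x² = 1` just says that `x` has the form `!![a, b; c, a]` with
`a² = 1 + b * c`. Over a perfect ring of characteristic 2 every element has a unique square root,
so `b` and `c` are arbitrary and determine `a`: a ring of `q` elements gives `q²` solutions, one of
which is `1`.
-/

open Matrix

theorem card_ne_one_and_pow_eq_one (M : Type*) [Monoid M] (n : ℕ) :
    Nat.card {x : M // x ≠ 1 ∧ x ^ n = 1} = Nat.card {x : M // x ^ n = 1} - 1 := by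
  have h : {x : M | x ≠ 1 ∧ x ^ n = 1} = {x | x ^ n = 1} \ {1} := by
    ext x
    exact and_comm
  exact (congrArg Set.ncard h).trans (Set.ncard_sdiff_singleton_of_mem (one_pow n))

theorem det_eq_one_iff_sq_diag_eq {R : Type*} [CommRing R] (a b c : R) :
    det !![a, b; c, a] = 1 ↔ a ^ 2 = 1 + b * c := by
  rw [det_fin_two_of, sub_eq_iff_eq_add, sq]

section CharTwo

variable {R : Type*} [CommRing R] [CharP R 2]

theorem sq_eq_one_iff_diag_eq (x : Matrix.SpecialLinearGroup (Fin 2) R) :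
    x ^ 2 = 1 ↔ x 0 0 = x 1 1 := by
  rw [sq, mul_eq_one_iff_eq_inv, Matrix.SpecialLinearGroup.ext_iff x x⁻¹]
  simp [Matrix.SpecialLinearGroup.coe_inv, adjugate_fin_two, Fin.forall_fin_two, CharTwo.neg_eq,
    eq_comm]

variable (R) [PerfectRing R 2]

/-- The solutions of `x² = 1` in `SL₂(R)`, for `R` a perfect ring of characteristic 2,
parametrized by their off-diagonal entries `(x 0 1, x 1 0)`. The square root giving the diagonal
entries is the inverse of the Frobenius automorphism. -/
noncomputable def sqEqOneEquiv :
    {x : Matrix.SpecialLinearGroup (Fin 2) R // x ^ 2 = 1} ≃ R × R where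
  toFun x := (x.1 0 1, x.1 1 0)
  invFun p :=
    let a := (frobeniusEquiv R 2).symm (1 + p.1 * p.2)
    have ha : a ^ 2 = 1 + p.1 * p.2 := frobeniusEquiv_symm_pow_p R 2 _
    ⟨⟨!![a, p.1; p.2, a], (det_eq_one_iff_sq_diag_eq a p.1 p.2).2 ha⟩,
      (sq_eq_one_iff_diag_eq _).2 rfl⟩
  left_inv := by
    rintro ⟨x, hx⟩
    have hdiag : x 0 0 = x 1 1 := (sq_eq_one_iff_diag_eq x).1 hx
    have hform : (x : Matrix (Fin 2) (Fin 2) R) = !![x 0 0, x 0 1; x 1 0, x 0 0] :=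
      (eta_fin_two _).trans (by rw [← hdiag])
    have hsq : x 0 0 ^ 2 = 1 + x 0 1 * x 1 0 :=
      (det_eq_one_iff_sq_diag_eq _ _ _).1 (hform ▸ x.det_coe)
    ext i j
    fin_cases i <;> fin_cases j <;> simp [← hsq, ← hdiag, frobeniusEquiv_symm_pow]
  right_inv _ := rfl

end CharTwo

theorem stmt11_general {R : Type*} [CommRing R] [IsReduced R] [Finite R] [CharP R 2] :
    Nat.card {x : Matrix.SpecialLinearGroup (Fin 2) R // x ≠ 1 ∧ x ^ 2 = 1} =
      Nat.card R ^ 2 - 1 := by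
  rw [card_ne_one_and_pow_eq_one, Nat.card_congr (sqEqOneEquiv R), Nat.card_prod, sq]

/-- Let `F` be a finite field of characteristic 2 with `|F| = q`. Then the number of
elements of order 2 in `SL₂(F)` (matrices `x ≠ 1` with `x² = 1`) equals `q² - 1`. -/
theorem stmt11 {F : Type*} [Field F] [Fintype F] (hchar : CharP F 2)
    (q : ℕ) (hq : Fintype.card F = q) :
    Nat.card {x : Matrix.SpecialLinearGroup (Fin 2) F // x ≠ 1 ∧ x ^ 2 = 1} =
      q ^ 2 - 1 := by
  rw [stmt11_general, Nat.card_eq_fintype_card, hq]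
end

section
/- Let F be a finite field of characteristic 2 with |F| = Q. Then the number of elements of order 2 in the symplectic group Sp_4(F) (the group of 4×4 matrices over F preserving a fixed nondegenerate alternating bilinear form) equals (Q⁴ − 1)(Q² + 1). -/
/-!
In characteristic 2 the solutions of `X ^ 2 = 1` in the symplectic group are the matrices
`1 + S * J` with `S` symmetric and `S * J * S = 0`. Over a perfect field of characteristic 2 a
symmetric matrix is uniquely `A + v vᵀ` with `A` alternating, `v` being the square root of the
diagonal, and then `yᵀ S y = (v ⬝ y) ^ 2` shows that every `y` killed by `S` is killed by `A` and
orthogonal to `v`. So `S * J * S = 0` splits into `A * J * A = 0` and `A * J * v = 0`: each `A` with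
`A * J * A = 0` accounts for `Q ^ (2n - rank A)` solutions.

In dimension 4 there are `Q ^ 4` such `A`, and `A ≠ 0` has rank exactly 2, since it contains an
invertible alternating `2 × 2` block while its range is isotropic. The solutions therefore number
`Q ^ 4 + (Q ^ 4 - 1) * Q ^ 2`, one of which is the identity.
-/

open Matrix

section Alternating

variable {m n R : Type*} [CommRing R]

/-- The matrix `A` is alternating, i.e. it is the Gram matrix of an alternating bilinear form. The
condition on the diagonal is what skew-symmetry misses in characteristic 2. -/
structure IsAlternating (A : Matrix n n R) : Prop where
  transpose_eq : Aᵀ = -A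
  diag_eq : A.diag = 0

namespace IsAlternating

variable {A B K : Matrix n n R} {v w : n → R}

protected theorem zero : IsAlternating (0 : Matrix n n R) :=
  ⟨by simp, by simp⟩

theorem apply_self (hA : IsAlternating A) (i : n) : A i i = 0 :=
  congrFun hA.diag_eq i

theorem apply_swap (hA : IsAlternating A) (i j : n) : A j i = -A i j :=
  congrFun₂ hA.transpose_eq i j

theorem isSymm [CharP R 2] (hA : IsAlternating A) : A.IsSymm :=
  IsSymm.ext fun i j => by rw [hA.apply_swap, CharTwo.neg_eq]

theorem isSymm_add_vecMulVec [CharP R 2] (hA : IsAlternating A) (v : n → R) :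
    (A + vecMulVec v v).IsSymm :=
  hA.isSymm.add (transpose_vecMulVec v v)

theorem two_le_rank [Fintype n] [IsDomain R] (hA : IsAlternating A) (hA₀ : A ≠ 0) :
    2 ≤ A.rank := by
  obtain ⟨i, j, hij⟩ : ∃ i j, A i j ≠ 0 := by
    simpa only [ne_eq, ← Matrix.ext_iff, not_forall] using! hA₀
  have hdet : (A.submatrix ![i, j] ![i, j]).det ≠ 0 := by
    rw [det_fin_two]
    simpa only [submatrix_apply, cons_val_zero, cons_val_one, hA.apply_self, hA.apply_swap i j,
      zero_mul, zero_sub, mul_neg, neg_neg] using mul_ne_zero hij hij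
  calc 2 = (A.submatrix ![i, j] ![i, j]).rank := by rw [rank_of_det_ne_zero hdet, Fintype.card_fin]
    _ ≤ A.rank := rank_submatrix_le A _ _

theorem dotProduct_mulVec_self [Fintype n] (hA : IsAlternating A) (y : n → R) :
    y ⬝ᵥ A *ᵥ y = 0 := by
  simp only [dotProduct, mulVec, Finset.mul_sum]
  rw [← Finset.sum_product']
  refine Finset.sum_involution (fun p _ => p.swap) ?_ ?_ (by simp) (by simp)
  · rintro ⟨i, j⟩ -
    simp only [Prod.swap, hA.apply_swap i j]
    ring
  · rintro ⟨i, j⟩ - hne hswap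
    obtain rfl : j = i := congrArg Prod.fst hswap
    simp [hA.apply_self] at hne

section Reduced

variable [Fintype n] [IsReduced R]

theorem add_vecMulVec_mulVec_eq_zero_iff (hA : IsAlternating A) {y : n → R} :
    (A + vecMulVec v v) *ᵥ y = 0 ↔ A *ᵥ y = 0 ∧ v ⬝ᵥ y = 0 := by
  have expand : (A + vecMulVec v v) *ᵥ y = A *ᵥ y + (v ⬝ᵥ y) • v := by
    simp [add_mulVec, vecMulVec_mulVec]
  constructor
  · intro h
    have hsq : (v ⬝ᵥ y) ^ 2 = 0 :=
      calc (v ⬝ᵥ y) ^ 2 = y ⬝ᵥ A *ᵥ y + (v ⬝ᵥ y) * (y ⬝ᵥ v) := by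
            rw [hA.dotProduct_mulVec_self, dotProduct_comm y v, zero_add, sq]
        _ = y ⬝ᵥ (A + vecMulVec v v) *ᵥ y := by
            rw [expand, dotProduct_add, dotProduct_smul, smul_eq_mul]
        _ = 0 := by rw [h, dotProduct_zero]
    have hvy : v ⬝ᵥ y = 0 := pow_eq_zero_iff two_ne_zero |>.mp hsq
    exact ⟨by simpa [expand, hvy] using h, hvy⟩
  · rintro ⟨hAy, hvy⟩
    rw [expand, hAy, hvy, zero_smul, add_zero]

theorem add_vecMulVec_mul_eq_zero_iff (hA : IsAlternating A) {M : Matrix n m R} :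
    (A + vecMulVec v v) * M = 0 ↔ A * M = 0 ∧ v ᵥ* M = 0 := by
  have mul_eq_zero_iff (B : Matrix n n R) : B * M = 0 ↔ ∀ j, B *ᵥ M.col j = 0 := by
    simp only [← Matrix.ext_iff, funext_iff]
    exact forall_comm
  have vecMul_eq_zero_iff : v ᵥ* M = 0 ↔ ∀ j, v ⬝ᵥ M.col j = 0 := funext_iff
  simp only [mul_eq_zero_iff, vecMul_eq_zero_iff, hA.add_vecMulVec_mulVec_eq_zero_iff, forall_and]

variable [CharP R 2]

theorem add_vecMulVec_mul_mul_self_eq_zero_iff (hA : IsAlternating A) (hK : IsAlternating K) :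
    (A + vecMulVec v v) * K * (A + vecMulVec v v) = 0 ↔ A * K * A = 0 ∧ (A * K) *ᵥ v = 0 := by
  set S := A + vecMulVec v v with hS
  have hST : Sᵀ = S := hA.isSymm_add_vecMulVec v
  have left : A * (K * S) = 0 ↔ S * (K * A) = 0 := by
    rw [← transpose_eq_zero, transpose_mul, transpose_mul, hST, hA.isSymm.eq, hK.isSymm.eq,
      Matrix.mul_assoc]
  have right : v ᵥ* (K * S) = 0 ↔ S *ᵥ (K *ᵥ v) = 0 := by
    rw [← mulVec_transpose, transpose_mul, hST, hK.isSymm.eq, mulVec_mulVec]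
  have dual : v ᵥ* (K * A) = 0 ↔ A *ᵥ (K *ᵥ v) = 0 := by
    rw [← mulVec_transpose, transpose_mul, hA.isSymm.eq, hK.isSymm.eq, mulVec_mulVec]
  rw [Matrix.mul_assoc, hS, hA.add_vecMulVec_mul_eq_zero_iff, ← hS, left, right, hS,
    hA.add_vecMulVec_mul_eq_zero_iff, hA.add_vecMulVec_mulVec_eq_zero_iff, dual,
    hK.dotProduct_mulVec_self, ← Matrix.mul_assoc, mulVec_mulVec]
  tauto

end Reduced

theorem add_vecMulVec_inj [CharP R 2] [IsReduced R] (hA : IsAlternating A)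
    (hB : IsAlternating B) : A + vecMulVec v v = B + vecMulVec w w ↔ A = B ∧ v = w := by
  refine ⟨fun h => ?_, by rintro ⟨rfl, rfl⟩; rfl⟩
  obtain rfl : v = w := by
    ext i
    apply frobenius_inj R 2
    simpa [hA.apply_self, hB.apply_self, vecMulVec_apply, frobenius_def, sq]
      using congrFun₂ h i i
  exact ⟨add_right_cancel h, rfl⟩

end IsAlternating

theorem exists_isAlternating_eq_add_vecMulVec [CharP R 2] [PerfectRing R 2] {S : Matrix n n R}
    (hS : S.IsSymm) : ∃ A v, IsAlternating A ∧ S = A + vecMulVec v v := by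
  choose v hv using fun i => surjective_frobenius R 2 (S i i)
  refine ⟨S - vecMulVec v v, v, ⟨?_, ?_⟩, (sub_add_cancel _ _).symm⟩
  · ext i j
    simp [CharTwo.neg_eq, hS.apply i j, vecMulVec_apply, mul_comm]
  · ext i
    simp [vecMulVec_apply, ← hv, frobenius_def, sq]

end Alternating

theorem isReduced_of_perfectRing (R : Type*) (p : ℕ) [Fact p.Prime] [CommRing R] [CharP R p]
    [PerfectRing R p] : IsReduced R :=
  (isReduced_iff_pow_one_lt p (Fact.out : p.Prime).one_lt).2 fun _ hx =>
    injective_pow_p R p (hx.trans (zero_pow (NeZero.ne p)).symm)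

section Symplectic

variable {l R : Type*} [DecidableEq l] [CommRing R]

theorem isAlternating_J : IsAlternating (J l R) :=
  ⟨J_transpose l R, by ext (_ | _) <;> simp [J]⟩

variable [Fintype l]

theorem mul_J_mul_J (M : Matrix (l ⊕ l) (l ⊕ l) R) : M * J l R * J l R = -M := by
  rw [Matrix.mul_assoc, J_squared, Matrix.mul_neg, Matrix.mul_one]

theorem mul_J_injective : Function.Injective fun M : Matrix (l ⊕ l) (l ⊕ l) R => M * J l R :=
  fun M N h => by simpa [mul_J_mul_J] using congrArg (· * J l R) h

theorem exists_eq_one_add_mul_J (X : Matrix (l ⊕ l) (l ⊕ l) R) : ∃ S, X = 1 + S * J l R :=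
  ⟨(1 - X) * J l R, by rw [mul_J_mul_J]; abel⟩

theorem one_add_mul_J_mem_symplecticGroup_iff {S : Matrix (l ⊕ l) (l ⊕ l) R}
    (hS : S * J l R * S = 0) : 1 + S * J l R ∈ symplecticGroup l R ↔ S.IsSymm := by
  have expand : (1 + S * J l R) * J l R * (1 + S * J l R)ᵀ =
      J l R + (Sᵀ - S + S * J l R * Sᵀ) := by
    simp only [transpose_add, transpose_one, transpose_mul, J_transpose, add_mul, mul_add,
      mul_one, one_mul, mul_J_mul_J, neg_mul, mul_neg, ← mul_assoc, J_squared]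
    abel
  rw [SymplecticGroup.mem_iff, expand, add_eq_left, IsSymm]
  constructor
  · intro h
    have hST : S * J l R * Sᵀ = 0 := by
      simpa [mul_add, mul_sub, ← mul_assoc, hS] using congrArg (S * J l R * ·) h
    exact sub_eq_zero.mp (by simpa [hST] using h)
  · intro h
    rw [h, hS, sub_self, zero_add]

theorem one_add_mul_J_sq_eq_one_iff [CharP R 2] {S : Matrix (l ⊕ l) (l ⊕ l) R} :
    (1 + S * J l R) ^ 2 = 1 ↔ S * J l R * S = 0 := by
  have double (M : Matrix (l ⊕ l) (l ⊕ l) R) : M + M = 0 := by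
    ext; exact CharTwo.add_self_eq_zero _
  have expand : (1 + S * J l R) ^ 2 = 1 + S * J l R * S * J l R := by
    calc (1 + S * J l R) ^ 2
        = 1 + (S * J l R + S * J l R) + S * J l R * S * J l R := by noncomm_ring
      _ = _ := by rw [double, add_zero]
  rw [expand, add_eq_left, mul_J_injective.eq_iff' (Matrix.zero_mul _)]

theorem two_mul_rank_le_of_mul_J_mul_self_eq_zero {F : Type*} [Field F]
    {A : Matrix (l ⊕ l) (l ⊕ l) F} (hA : A * J l F * A = 0) :
    2 * A.rank ≤ Fintype.card (l ⊕ l) := by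
  have h := rank_add_rank_le_card_of_mul_eq_zero hA
  rwa [rank_mul_eq_left_of_isUnit_det _ _ (isUnit_det_J l F), ← two_mul] at h

/-- The alternating matrices whose range is totally isotropic for `J`: these are the alternating
parts of the matrices `S` for which `1 + S * J` is a symplectic matrix of square `1`. -/
abbrev IsotropicAlternating (l R : Type*) [DecidableEq l] [Fintype l] [CommRing R] : Type _ :=
  {A : Matrix (l ⊕ l) (l ⊕ l) R // IsAlternating A ∧ A * J l R * A = 0}

variable [CharP R 2] [PerfectRing R 2]

/-- The solution `1 + (A + v vᵀ) * J` of `X ^ 2 = 1` in the symplectic group with parameters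
`(A, v)`. -/
def symplecticOfPair (p : Σ A : IsotropicAlternating l R, LinearMap.ker (A.1 * J l R).mulVecLin) :
    {x : symplecticGroup l R // x ^ 2 = 1} :=
  have hS : (p.1.1 + vecMulVec p.2.1 p.2.1) * J l R * (p.1.1 + vecMulVec p.2.1 p.2.1) = 0 :=
    have := isReduced_of_perfectRing R 2
    (p.1.2.1.add_vecMulVec_mul_mul_self_eq_zero_iff isAlternating_J).2 ⟨p.1.2.2, p.2.2⟩
  ⟨⟨1 + (p.1.1 + vecMulVec p.2.1 p.2.1) * J l R,
    (one_add_mul_J_mem_symplecticGroup_iff hS).2 (p.1.2.1.isSymm_add_vecMulVec _)⟩,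
    Subtype.ext (one_add_mul_J_sq_eq_one_iff.2 hS)⟩

theorem bijective_symplecticOfPair : Function.Bijective (symplecticOfPair (l := l) (R := R)) := by
  have := isReduced_of_perfectRing R 2
  constructor
  · rintro ⟨⟨A, hA⟩, ⟨v, hv⟩⟩ ⟨⟨B, hB⟩, ⟨w, hw⟩⟩ h
    have hadd : A + vecMulVec v v = B + vecMulVec w w :=
      mul_J_injective (add_left_cancel (congrArg (fun x => x.1.1) h))
    obtain ⟨rfl, rfl⟩ := (hA.1.add_vecMulVec_inj hB.1).1 hadd
    rfl
  · rintro ⟨⟨X, hX⟩, hX₂⟩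
    obtain ⟨S, rfl⟩ := exists_eq_one_add_mul_J X
    have hSJS : S * J l R * S = 0 := one_add_mul_J_sq_eq_one_iff.1 (congrArg Subtype.val hX₂)
    obtain ⟨A, v, hA, rfl⟩ := exists_isAlternating_eq_add_vecMulVec
      ((one_add_mul_J_mem_symplecticGroup_iff hSJS).1 hX)
    obtain ⟨hAJA, hv⟩ := (hA.add_vecMulVec_mul_mul_self_eq_zero_iff isAlternating_J).1 hSJS
    exact ⟨⟨⟨A, hA, hAJA⟩, ⟨v, hv⟩⟩, rfl⟩

end Symplectic

section Count

variable {F : Type*} [Field F]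

theorem natCard_ker_mulVecLin {m n : Type*} [Fintype n] (M : Matrix m n F) :
    Nat.card (LinearMap.ker M.mulVecLin) = Nat.card F ^ (Fintype.card n - M.rank) := by
  rw [Module.natCard_eq_pow_finrank (K := F), Matrix.rank, ← Module.finrank_pi F (ι := n),
    ← M.mulVecLin.finrank_range_add_finrank_ker, Nat.add_sub_cancel_left]

theorem natCard_sq_eq_one_symplecticGroup {l : Type*} [DecidableEq l] [Fintype l] [Finite F]
    [CharP F 2] [Fintype (IsotropicAlternating l F)] :
    Nat.card {x : symplecticGroup l F // x ^ 2 = 1} =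
      ∑ A : IsotropicAlternating l F, Nat.card F ^ (Fintype.card (l ⊕ l) - A.1.rank) := by
  rw [← Nat.card_eq_of_bijective _ bijective_symplecticOfPair, Nat.card_sigma]
  simp only [natCard_ker_mulVecLin, rank_mul_eq_left_of_isUnit_det _ _ (isUnit_det_J l F)]

end Count

section DimensionFour

variable {R : Type*} [CommRing R]

/-- The alternating `4 × 4` matrix of characteristic 2 whose entries above the diagonal are `b` and
`e` inside the two diagonal blocks and `p`, `q`, `r`, `s` in the off-diagonal block. -/
def alternatingOfEntries (b e p q r s : R) : Matrix (Fin 2 ⊕ Fin 2) (Fin 2 ⊕ Fin 2) R :=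
  fromBlocks !![0, b; b, 0] !![p, q; r, s] !![p, r; q, s] !![0, e; e, 0]

variable [CharP R 2]

theorem isAlternating_alternatingOfEntries (b e p q r s : R) :
    IsAlternating (alternatingOfEntries b e p q r s) := by
  constructor
  · ext (i | i) (j | j) <;> fin_cases i <;> fin_cases j <;>
      simp [alternatingOfEntries, CharTwo.neg_eq]
  · ext (i | i) <;> fin_cases i <;> simp [alternatingOfEntries]

theorem IsAlternating.exists_eq_alternatingOfEntries
    {A : Matrix (Fin 2 ⊕ Fin 2) (Fin 2 ⊕ Fin 2) R} (hA : IsAlternating A) :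
    ∃ b e p q r s, A = alternatingOfEntries b e p q r s := by
  refine ⟨A (.inl 0) (.inl 1), A (.inr 0) (.inr 1), A (.inl 0) (.inr 0), A (.inl 0) (.inr 1),
    A (.inl 1) (.inr 0), A (.inl 1) (.inr 1), ?_⟩
  ext (i | i) (j | j) <;> fin_cases i <;> fin_cases j <;>
    simp [alternatingOfEntries, hA.apply_self, hA.isSymm.apply]

-- The Cayley–Hamilton theorem for `A * J`, whose characteristic polynomial is a square.
theorem alternatingOfEntries_mul_J_mul_self (b e p q r s : R) :
    alternatingOfEntries b e p q r s * J (Fin 2) R * alternatingOfEntries b e p q r s =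
      (p + s) • alternatingOfEntries b e p q r s + (p * s + q * r + b * e) • J (Fin 2) R := by
  ext (i | i) (j | j) <;> fin_cases i <;> fin_cases j <;>
    simp [alternatingOfEntries, J, fromBlocks_multiply] <;> grind [CharTwo.two_eq_zero (R := R)]

theorem alternatingOfEntries_mul_J_mul_self_eq_zero_iff [IsReduced R] {b e p q r s : R} :
    alternatingOfEntries b e p q r s * J (Fin 2) R * alternatingOfEntries b e p q r s = 0 ↔
      s = p ∧ p ^ 2 = q * r + b * e := by
  rw [alternatingOfEntries_mul_J_mul_self]
  constructor
  · intro h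
    have h₁ : (p + s) * p - (p * s + q * r + b * e) = 0 := by
      simpa [alternatingOfEntries, J, sub_eq_add_neg] using congrFun₂ h (.inl 0) (.inr 0)
    have h₂ : (p + s) * s - (p * s + q * r + b * e) = 0 := by
      simpa [alternatingOfEntries, J, sub_eq_add_neg] using congrFun₂ h (.inl 1) (.inr 1)
    have hp : p ^ 2 = q * r + b * e := by linear_combination h₁
    have hs : s ^ 2 = q * r + b * e := by linear_combination h₂
    exact ⟨frobenius_inj R 2 (hs.trans hp.symm), hp⟩
  · rintro ⟨rfl, h⟩
    rw [CharTwo.add_self_eq_zero, ← sq, h, add_assoc, CharTwo.add_self_eq_zero]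
    simp

/-- The matrix `A` with `A * J * A = 0` having the given entries `(b, e, q, r)`; its remaining
entry `p` satisfies `p ^ 2 = q * r + b * e`. -/
noncomputable def isotropicOfEntries [PerfectRing R 2] (z : R × R × R × R) :
    IsotropicAlternating (Fin 2) R :=
  let p := (frobeniusEquiv R 2).symm (z.2.2.1 * z.2.2.2 + z.1 * z.2.1)
  ⟨alternatingOfEntries z.1 z.2.1 p z.2.2.1 z.2.2.2 p, isAlternating_alternatingOfEntries ..,
    have := isReduced_of_perfectRing R 2
    alternatingOfEntries_mul_J_mul_self_eq_zero_iff.2 ⟨rfl, frobeniusEquiv_symm_pow_p ..⟩⟩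

theorem bijective_isotropicOfEntries [PerfectRing R 2] :
    Function.Bijective (isotropicOfEntries (R := R)) := by
  have := isReduced_of_perfectRing R 2
  constructor
  · rintro ⟨b, e, q, r⟩ ⟨b', e', q', r'⟩ h
    have entry (i j) := congrFun₂ (congrArg Subtype.val h) i j
    obtain rfl : b = b' := entry (.inl 0) (.inl 1)
    obtain rfl : e = e' := entry (.inr 0) (.inr 1)
    obtain rfl : q = q' := entry (.inl 0) (.inr 1)
    obtain rfl : r = r' := entry (.inl 1) (.inr 0)
    rfl
  · rintro ⟨A, hA, hAJA⟩
    obtain ⟨b, e, p, q, r, s, rfl⟩ := hA.exists_eq_alternatingOfEntries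
    obtain ⟨rfl, hp⟩ := alternatingOfEntries_mul_J_mul_self_eq_zero_iff.1 hAJA
    exact ⟨(b, e, q, r), by simp [isotropicOfEntries, ← hp]⟩

theorem natCard_isotropicAlternating_fin_two [PerfectRing R 2] :
    Nat.card (IsotropicAlternating (Fin 2) R) = Nat.card R ^ 4 := by
  rw [← Nat.card_eq_of_bijective _ bijective_isotropicOfEntries]
  simp only [Nat.card_prod]
  ring

theorem IsotropicAlternating.rank_eq_two {F : Type*} [Field F]
    {A : IsotropicAlternating (Fin 2) F} (hA : A.1 ≠ 0) : A.1.rank = 2 := by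
  have upper : 2 * A.1.rank ≤ 2 + 2 := two_mul_rank_le_of_mul_J_mul_self_eq_zero A.2.2
  have lower : 2 ≤ A.1.rank := A.2.1.two_le_rank hA
  lia

theorem natCard_sq_eq_one_symplecticGroup_fin_two {F : Type*} [Field F] [Finite F] [CharP F 2] :
    Nat.card {x : symplecticGroup (Fin 2) F // x ^ 2 = 1} =
      Nat.card F ^ 4 + (Nat.card F ^ 4 - 1) * Nat.card F ^ 2 := by
  classical
  have := Fintype.ofFinite (IsotropicAlternating (Fin 2) F)
  let O : IsotropicAlternating (Fin 2) F := ⟨0, .zero, by simp⟩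
  have rank_eq_two (A) (hA : A ∈ Finset.univ.erase O) : A.1.rank = 2 :=
    IsotropicAlternating.rank_eq_two fun h => Finset.ne_of_mem_erase hA (Subtype.ext h)
  rw [natCard_sq_eq_one_symplecticGroup, ← Finset.add_sum_erase _ _ (Finset.mem_univ O),
    Finset.sum_congr rfl fun A hA => by rw [rank_eq_two A hA], Finset.sum_const,
    Finset.card_erase_of_mem (Finset.mem_univ _), Finset.card_univ,
    ← Nat.card_eq_fintype_card (α := IsotropicAlternating (Fin 2) F),
    natCard_isotropicAlternating_fin_two, smul_eq_mul]
  simp [O]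

end DimensionFour

theorem natCard_involutions_add_one {G : Type*} [Monoid G] [Finite G] :
    Nat.card {x : G // x ≠ 1 ∧ x ^ 2 = 1} + 1 = Nat.card {x : G // x ^ 2 = 1} := by
  have h := Set.ncard_sdiff_singleton_add_one (s := {x : G | x ^ 2 = 1}) (a := 1) (one_pow 2)
  rw [← Nat.card_coe_set_eq, ← Nat.card_coe_set_eq] at h
  rw [← Nat.card_congr (Equiv.subtypeEquivRight fun x => and_comm)]
  exact h

/-- Let `F` be a finite field of characteristic 2 with `|F| = Q`. Then the number of
elements of order 2 in the symplectic group `Sp₄(F)` (4×4 matrices preserving a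
nondegenerate alternating bilinear form) equals `(Q⁴ - 1)(Q² + 1)`. -/
theorem stmt12 {F : Type*} [Field F] [Fintype F] (hchar : CharP F 2)
    (Q : ℕ) (hQ : Fintype.card F = Q) :
    Nat.card {x : Matrix.symplecticGroup (Fin 2) F // x ≠ 1 ∧ x ^ 2 = 1} =
      (Q ^ 4 - 1) * (Q ^ 2 + 1) := by
  have hcount := natCard_involutions_add_one (G := symplecticGroup (Fin 2) F)
  rw [natCard_sq_eq_one_symplecticGroup_fin_two, Nat.card_eq_fintype_card (α := F), hQ] at hcount
  have hpos : 0 < Q ^ 4 := pow_pos (hQ ▸ Fintype.card_pos) 4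
  rw [mul_add_one]
  lia
end
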